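/- If A is n-good (0, n-1 ∈ A ⊆ {0,...,n-1} and C_{A,n} + C_{A,n} = [0,2]), then Lebesgue-almost every z ∈ [0,2] has continuum-many ordered representations z = x + y with x, y ∈ C_{A,n}. -/

import Mathlib

open Pointwise

def linCantor (n : ℕ) (A : Set ℕ) : Set ℝ :=
  {x | ∃ a : ℕ → ℕ, (∀ i, a i ∈ A) ∧ x = ∑' i : ℕ, (a i : ℝ) / n ^ (i + 1)}

open MeasureTheory

noncomputable def SS (n : ℕ) (a : ℕ → ℕ) : ℝ := ∑' i : ℕ, (a i : ℝ) / n ^ (i + 1)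

lemma geo (n : ℕ) (hn : 2 ≤ n) :
    HasSum (fun i : ℕ => ((n : ℝ) - 1) / n ^ (i + 1)) 1 := by
  have hn' : (2:ℝ) ≤ n := by exact_mod_cast hn
  have h := (hasSum_geometric_of_lt_one (r := (n:ℝ)⁻¹) (by positivity)
    (inv_lt_one_of_one_lt₀ (by linarith))).mul_left (((n:ℝ) - 1) / n)
  have h1 : (n:ℝ) - 1 ≠ 0 := by linarith
  have e1 : ((n:ℝ) - 1) / n * (1 - (n:ℝ)⁻¹)⁻¹ = 1 := by field_simp
  have e2 : (fun i : ℕ => ((n:ℝ) - 1) / n * (n:ℝ)⁻¹ ^ i)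
      = fun i : ℕ => ((n : ℝ) - 1) / n ^ (i + 1) := by
    ext i; rw [inv_pow, pow_succ]; field_simp
  rwa [e1, e2] at h

lemma SS_le_term (n : ℕ) (a : ℕ → ℕ) (ha : ∀ i, a i < n) (i : ℕ) :
    (a i : ℝ) / n ^ (i + 1) ≤ ((n : ℝ) - 1) / n ^ (i + 1) := by
  have : (a i : ℝ) + 1 ≤ n := by exact_mod_cast ha i
  gcongr; linarith

lemma SS_summable (n : ℕ) (hn : 2 ≤ n) (a : ℕ → ℕ) (ha : ∀ i, a i < n) :
    Summable (fun i : ℕ => (a i : ℝ) / n ^ (i + 1)) :=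
  Summable.of_nonneg_of_le (fun i => by positivity) (SS_le_term n a ha) (geo n hn).summable

lemma SS_nonneg (n : ℕ) (a : ℕ → ℕ) : 0 ≤ SS n a := tsum_nonneg fun i => by positivity

lemma SS_le_one (n : ℕ) (hn : 2 ≤ n) (a : ℕ → ℕ) (ha : ∀ i, a i < n) : SS n a ≤ 1 :=
  ((SS_summable n hn a ha).tsum_le_tsum (SS_le_term n a ha) (geo n hn).summable).trans_eq
    (geo n hn).tsum_eq

lemma SS_shift (n : ℕ) (hn : 2 ≤ n) (a : ℕ → ℕ) (ha : ∀ i, a i < n) :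
    SS n a = (a 0 + SS n (fun i => a (i + 1))) / n := by
  unfold SS
  rw [(SS_summable n hn a ha).tsum_eq_zero_add, add_div, ← tsum_div_const]
  congr 1
  · simp
  · congr 1; ext i; rw [pow_succ _ (i+1)]; field_simp

lemma SS_lt (n : ℕ) (hn : 2 ≤ n) (m : ℕ) : ∀ (u v : ℕ → ℕ) (_ : ∀ i, u i < n)
    (_ : ∀ i, v i < n) (_ : ∀ i < m, u i = v i) (_ : u m < v m) (_ : u (m+1) = v (m+1)),
    SS n u < SS n v := by
  have hn' : (2:ℝ) ≤ n := by exact_mod_cast hn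
  induction m with
  | zero =>
    intro u v hu hv _ h1 h2
    rw [SS_shift n hn u hu, SS_shift n hn v hv, SS_shift n hn _ (fun i => hu (i+1)),
      SS_shift n hn _ (fun i => hv (i+1))]
    have e1 := SS_le_one n hn _ (fun i => hu (i+1+1))
    have e2 := SS_nonneg n (fun i => v (i+1+1))
    have h1' : (u 0 : ℝ) + 1 ≤ v 0 := by exact_mod_cast h1
    simp only [h2]
    set s := SS n (fun i => u (i+1+1))
    set t := SS n (fun i => v (i+1+1))
    have h3 : ((v (0+1) : ℝ) + s) / n < 1 + ((v (0+1) : ℝ) + t) / n := by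
      rw [div_lt_iff₀ (by linarith), add_mul, div_mul_cancel₀ _ (by linarith)]
      linarith
    gcongr ?_ / _
    linarith
  | succ m ih =>
    intro u v hu hv h0 h1 h2
    rw [SS_shift n hn u hu, SS_shift n hn v hv, h0 0 (by omega)]
    have := ih _ _ (fun i => hu (i+1)) (fun i => hv (i+1)) (fun i hi => h0 (i+1) (by omega)) h1 h2
    gcongr

lemma SS_tail (n : ℕ) (hn : 2 ≤ n) (k : ℕ) : ∀ (a : ℕ → ℕ) (_ : ∀ i, a i < n),
    ∃ q : ℚ, SS n a = q + SS n (fun i => a (i + k)) / n ^ k := by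
  induction k with
  | zero => intro a _; exact ⟨0, by simp⟩
  | succ k ih =>
    intro a ha
    obtain ⟨q, hq⟩ := ih (fun i => a (i+1)) (fun i => ha _)
    refine ⟨(a 0 + q) / n, ?_⟩
    rw [SS_shift n hn a ha, hq]
    push_cast
    have : (n:ℝ) ≠ 0 := by positivity
    have e : (fun i => a (i + k + 1)) = fun i => a (i + (k+1)) := rfl
    rw [e, pow_succ]
    field_simp
    try ring

lemma mem_linCantor (n : ℕ) (A : Set ℕ) (x : ℝ) :
    x ∈ linCantor n A ↔ ∃ a : ℕ → ℕ, (∀ i, a i ∈ A) ∧ x = SS n a := Iff.rfl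

lemma affine_vol (C : Set ℝ) (c q : ℝ) :
    volume ((fun w => q + c * w) '' C) = ENNReal.ofReal |c| * volume C := by
  have : (fun w => q + c * w) '' C = (fun w => q + w) '' (c • C) := by
    rw [← Set.image_smul, Set.image_image]; rfl
  rw [this, Set.image_add_left, measure_preimage_add, Measure.addHaar_smul]
  simp

lemma linCantor_null (n : ℕ) (hn : 2 ≤ n) (A : Set ℕ) (hA : ∀ a ∈ A, a < n)
    (hne : ∃ d < n, d ∉ A) : volume (linCantor n A) = 0 := by
  classical
  obtain ⟨d, hd, hdA⟩ := hne
  set C := linCantor n A with hC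
  have hfin : volume C ≠ ⊤ := by
    refine ne_top_of_le_ne_top ?_ (measure_mono (t := Set.Icc (0:ℝ) 1) ?_)
    · simp
    · rintro x ⟨a, ha, rfl⟩
      exact ⟨SS_nonneg n a, SS_le_one n hn a (fun i => hA _ (ha i))⟩
  set F := (Finset.range n).erase d
  have hsub : C ⊆ ⋃ a ∈ F, (fun w : ℝ => (a:ℝ) / n + (1/(n:ℝ)) * w) '' C := by
    rintro x ⟨a, ha, rfl⟩
    simp only [Set.mem_iUnion]
    refine ⟨a 0, ?_, SS n (fun i => a (i+1)), ⟨_, fun i => ha _, rfl⟩, ?_⟩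
    · simp only [F, Finset.mem_erase, Finset.mem_range]
      exact ⟨fun h => hdA (h ▸ ha 0), hA _ (ha 0)⟩
    · have := SS_shift n hn a (fun i => hA _ (ha i))
      rw [SS] at this
      rw [this]; ring
  have h1 : volume C ≤ ((n - 1 : ℕ) : ENNReal) * (ENNReal.ofReal (1 / n) * volume C) := by
    refine (measure_mono hsub).trans ((measure_biUnion_finset_le _ _).trans ?_)
    simp only [affine_vol, Finset.sum_const, nsmul_eq_mul]
    rw [abs_of_nonneg (by positivity), Finset.card_erase_of_mem (by simpa using hd),
      Finset.card_range]
  have h2 := ENNReal.toReal_mono (by finiteness) h1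
  rw [ENNReal.toReal_mul, ENNReal.toReal_mul, ENNReal.toReal_ofReal (by positivity),
    ENNReal.toReal_natCast, Nat.cast_sub (by omega)] at h2
  have hn' : (2:ℝ) ≤ n := by exact_mod_cast hn
  have h3 : (volume C).toReal = 0 := by
    have h0 : 0 ≤ (volume C).toReal := ENNReal.toReal_nonneg
    have : ((n:ℝ) - (1:ℕ)) * (1 / n * (volume C).toReal)
      = (volume C).toReal - (volume C).toReal / n := by
      field_simp; simp; ring
    rw [this] at h2
    have h5 : (volume C).toReal / n ≤ 0 := by linarith
    have := (div_le_iff₀ (by linarith : (0:ℝ) < n)).1 h5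
    linarith
  exact (ENNReal.toReal_eq_zero_iff _).1 h3 |>.resolve_right hfin

lemma full_case (n : ℕ) (hn : 2 ≤ n) (A : Set ℕ) (hA : ∀ d < n, d ∈ A) (x : ℝ)
    (hx : x ∈ Set.Ico (0:ℝ) 1) : x ∈ linCantor n A := by
  have : NeZero n := ⟨by omega⟩
  refine ⟨fun i => (Real.digits x n i : ℕ), fun i => hA _ (Fin.is_lt _), ?_⟩
  have := Real.ofDigits_digits (b := n) (by omega) hx
  conv_lhs => rw [← this]
  unfold Real.ofDigits Real.ofDigitsTerm
  congr 1

lemma many (n : ℕ) (hn : 2 ≤ n) (A : Set ℕ) (hA : ∀ a ∈ A, a < n) (a b : ℕ → ℕ)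
    (ha : ∀ i, a i ∈ A) (hb : ∀ i, b i ∈ A) (hinf : ∀ k, ∃ i ≥ k, a i ≠ b i) :
    Cardinal.continuum ≤ Cardinal.mk {p : ℝ × ℝ | p.1 ∈ linCantor n A ∧ p.2 ∈ linCantor n A ∧
        p.1 + p.2 = SS n a + SS n b} := by
  classical
  obtain ⟨f, hf, hf2⟩ := Filter.extraction_of_frequently_atTop
    (P := fun i => a i ≠ b i) (Filter.frequently_atTop.2 hinf)
  let P : Set ℕ → ℕ → Prop := fun s i => ∃ j ∈ s, i = f (2 * j)
  let u : Set ℕ → ℕ → ℕ := fun s i => if P s i then b i else a i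
  let v : Set ℕ → ℕ → ℕ := fun s i => if P s i then a i else b i
  have hu : ∀ s i, u s i ∈ A := fun s i => by dsimp only [u]; split_ifs <;> simp [ha, hb]
  have hv : ∀ s i, v s i ∈ A := fun s i => by dsimp only [v]; split_ifs <;> simp [ha, hb]
  have hsum : ∀ s, SS n (u s) + SS n (v s) = SS n a + SS n b := by
    intro s
    unfold SS
    rw [← (SS_summable n hn _ (fun i => hA _ (hu s i))).tsum_add
      (SS_summable n hn _ (fun i => hA _ (hv s i))),
      ← (SS_summable n hn _ (fun i => hA _ (ha i))).tsum_add
      (SS_summable n hn _ (fun i => hA _ (hb i)))]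
    congr 1; ext i
    dsimp only [u, v]; split_ifs <;> ring
  have hPf : ∀ s j, P s (f (2 * j)) ↔ j ∈ s := by
    intro s j
    constructor
    · rintro ⟨j', h, e⟩
      have := hf.injective e
      have : j = j' := by omega
      exact this ▸ h
    · intro h; exact ⟨j, h, rfl⟩
  have hPs : ∀ s j, ¬ P s (f (2 * j) + 1) := by
    rintro s j ⟨j', h, e⟩
    have h1 : 2 * j < 2 * j' := hf.lt_iff_lt.1 (by omega)
    have h2 := hf (show 2 * j < 2 * j + 1 by omega)
    have h3 := hf (show 2 * j + 1 < 2 * j' by omega)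
    omega
  have hinj : Function.Injective (fun s => SS n (u s)) := by
    intro s t hst
    by_contra hne
    have hex : ∃ j, ¬ (j ∈ s ↔ j ∈ t) := by
      by_contra hh; push Not at hh; exact hne (Set.ext hh)
    let j := Nat.find hex
    have hj : ¬ (j ∈ s ↔ j ∈ t) := Nat.find_spec hex
    have hlt : ∀ i < f (2 * j), u s i = u t i := by
      intro i hi
      have : P s i ↔ P t i := by
        have key : ∀ j', i = f (2 * j') → (j' ∈ s ↔ j' ∈ t) := by
          intro j' e
          have : 2 * j' < 2 * j := hf.lt_iff_lt.1 (e ▸ hi)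
          exact not_not.1 (Nat.find_min hex (show j' < j by omega))
        constructor
        · rintro ⟨j', h, e⟩; exact ⟨j', (key j' e).1 h, e⟩
        · rintro ⟨j', h, e⟩; exact ⟨j', (key j' e).2 h, e⟩
      simp only [u, this]
    have hat : u s (f (2 * j)) ≠ u t (f (2 * j)) := by
      have := hf2 (2 * j)
      simp only [u, hPf]
      by_cases h1 : j ∈ s <;> by_cases h2 : j ∈ t <;> simp_all [Ne.symm]
    have haf : u s (f (2 * j) + 1) = u t (f (2 * j) + 1) := by
      simp only [u, hPs, if_false]
    rcases lt_or_gt_of_ne hat with h | h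
    · exact (SS_lt n hn _ _ _ (fun i => hA _ (hu s i)) (fun i => hA _ (hu t i)) hlt h haf).ne hst
    · exact (SS_lt n hn _ _ _ (fun i => hA _ (hu t i)) (fun i => hA _ (hu s i))
        (fun i hi => (hlt i hi).symm) h haf.symm).ne hst.symm
  rw [← Cardinal.two_power_aleph0, ← Cardinal.mk_nat, ← Cardinal.mk_set]
  refine Cardinal.mk_le_of_injective (f := fun s : Set ℕ =>
    ⟨(SS n (u s), SS n (v s)), ⟨_, hu s, rfl⟩, ⟨_, hv s, rfl⟩, hsum s⟩) ?_
  intro s t h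
  exact hinj (congrArg (fun p => p.1.1) h)

/-- If `A` is `n`-good, then a.e. `z ∈ [0,2]` has continuum-many ordered
representations `z = x + y` with `x, y ∈ C_{A,n}`. -/
theorem ae_continuum_representations (n : ℕ) (hn : 2 ≤ n) (A : Set ℕ)
    (h0 : 0 ∈ A) (htop : n - 1 ∈ A) (hA : ∀ a ∈ A, a < n)
    (hgood : linCantor n A + linCantor n A = Set.Icc (0 : ℝ) 2) :
    ∀ᵐ z ∂(MeasureTheory.volume.restrict (Set.Icc (0 : ℝ) 2)),
      Cardinal.mk {p : ℝ × ℝ | p.1 ∈ linCantor n A ∧ p.2 ∈ linCantor n A ∧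
        p.1 + p.2 = z} = Cardinal.continuum := by
  have hle : ∀ z : ℝ, Cardinal.mk {p : ℝ × ℝ | p.1 ∈ linCantor n A ∧ p.2 ∈ linCantor n A ∧
        p.1 + p.2 = z} ≤ Cardinal.continuum := by
    intro z
    refine (Cardinal.mk_set_le _).trans ?_
    simp [Cardinal.mk_real]
  rw [ae_restrict_iff' measurableSet_Icc]
  by_cases hne : ∃ d < n, d ∉ A
  · have hnull := linCantor_null n hn A hA hne
    have hB : volume (⋃ q : ℚ, ⋃ k : ℕ, (fun w : ℝ => (q:ℝ) + (2 / (n:ℝ)^k) * w) ''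
        linCantor n A) = 0 := by
      simp only [measure_iUnion_null_iff]
      intro q k
      rw [affine_vol, hnull, mul_zero]
    filter_upwards [measure_eq_zero_iff_ae_notMem.1 hB] with z hz hz2
    refine le_antisymm (hle z) ?_
    rw [← hgood] at hz2
    obtain ⟨x, ⟨a, ha, rfl⟩, y, ⟨b, hb, rfl⟩, rfl⟩ := hz2
    refine many n hn A hA a b ha hb ?_
    by_contra hcon
    push Not at hcon
    obtain ⟨k, hk⟩ := hcon
    apply hz
    obtain ⟨q, hq⟩ := SS_tail n hn k a (fun i => hA _ (ha i))
    obtain ⟨r, hr⟩ := SS_tail n hn k b (fun i => hA _ (hb i))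
    have e : (fun i => b (i + k)) = fun i => a (i + k) := by
      ext i; exact (hk _ (by omega)).symm
    rw [e] at hr
    simp only [Set.mem_iUnion]
    refine ⟨q + r, k, SS n (fun i => a (i + k)), ⟨_, fun i => ha _, rfl⟩, ?_⟩
    change _ = SS n a + SS n b
    rw [hq, hr]; push_cast; ring
  · push Not at hne
    filter_upwards [compl_mem_ae_iff.2 (measure_singleton (μ := volume) (0:ℝ)),
      compl_mem_ae_iff.2 (measure_singleton (μ := volume) (2:ℝ))] with z hz0 hz2 hz
    refine le_antisymm (hle z) ?_
    have h1 : 0 < z := lt_of_le_of_ne hz.1 (fun h => hz0 h.symm)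
    have h2 : z < 2 := lt_of_le_of_ne hz.2 hz2
    have h3 : max 0 (z - 1) < min 1 z := by
      simp only [max_lt_iff, lt_min_iff]; refine ⟨⟨?_, ?_⟩, ?_, ?_⟩ <;> linarith
    rw [← Cardinal.mk_Ioo_real h3]
    refine Cardinal.mk_le_of_injective (f := fun x : Set.Ioo (max 0 (z-1)) (min 1 z) =>
      ⟨((x:ℝ), z - x), ?_, ?_, ?_⟩) ?_
    · have := x.2; simp only [Set.mem_Ioo, max_lt_iff, lt_min_iff] at this
      exact full_case n hn A hne _ ⟨by linarith, by linarith⟩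
    · have := x.2; simp only [Set.mem_Ioo, max_lt_iff, lt_min_iff] at this
      exact full_case n hn A hne _ ⟨by dsimp only; linarith, by dsimp only; linarith⟩
    · simp
    · intro x y h
      exact Subtype.ext (congrArg (fun p => p.1.1) h)
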